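/- If G is a forest on n vertices with no isolated vertices, then the average order of a dominating set of G satisfies avd(G) ≤ 2n/3. -/

import Mathlib

open scoped Classical

/-- The family of all dominating sets of `G`, as a `Finset` of `Finset`s. -/
noncomputable def domSets {V : Type*} [Fintype V] (G : SimpleGraph V) :
    Finset (Finset V) :=
  Finset.univ.filter fun S => ∀ v ∉ S, ∃ u ∈ S, G.Adj u v

/-- The average order of a dominating set of `G`. -/
noncomputable def avd {V : Type*} [Fintype V] (G : SimpleGraph V) : ℚ :=
  (∑ S ∈ domSets G, (S.card : ℚ)) / ((domSets G).card : ℚ)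

/-- A leaf is a vertex of degree one. -/
noncomputable def IsLeaf {V : Type*} [Fintype V] (G : SimpleGraph V) (v : V) : Prop :=
  G.degree v = 1

/-- The set of leaf neighbors of `w` in `G`. -/
noncomputable def leafNbrSet {V : Type*} [Fintype V] (G : SimpleGraph V) (w : V) : Set V :=
  {v | G.Adj w v ∧ IsLeaf G v}

/-- A support vertex is a vertex adjacent to at least one leaf. -/
noncomputable def IsSupport {V : Type*} [Fintype V] (G : SimpleGraph V) (w : V) : Prop :=
  ∃ v, G.Adj w v ∧ IsLeaf G v

/-!
Count the pairs `(S, v)` with `S` dominating by whether `v ∈ S`: it suffices to show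
`∑ #S ≤ 2 * ∑ #Sᶜ`. Pairs `v ∈ S` with `S.erase v` still dominating inject into the pairs `v ∉ S`
by erasing `v`. Every other `v ∈ S` has a private neighbor: a vertex, possibly `v` itself, whose
only dominator in `S` is `v`.

Fix `f` sending every vertex to one of its neighbors. The vertices of `S` that are their own only
private neighbor are grouped into blocks by their image `w` under `f`. A vertex `w` with a nonempty
block lies outside `S` and is nobody's private neighbor, so it pays for one vertex of its block.
The surplus `#block - 1` is paid for by another dominating set: if two vertices of a block have
no common neighbor but `w`, then exchanging the block for `w` gives a dominating set in which the
external private neighbors of `w` are precisely the block. A vertex with `k > 0` external private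
neighbors needs only one of them to pay for itself, which leaves `k - 1`.
-/

open Finset

theorem sum_eq_card_filter_pos_add_sum_sub_one {ι : Type*} (s : Finset ι) (n : ι → ℕ) :
    ∑ i ∈ s, n i = #{i ∈ s | 0 < n i} + ∑ i ∈ s, (n i - 1) := by
  rw [card_filter, ← sum_add_distrib]
  refine sum_congr rfl fun i _ => ?_
  split_ifs <;> omega

theorem subsingleton_commonNeighbors_of_isAcyclic {V : Type*} {G : SimpleGraph V}
    (hG : G.IsAcyclic) {u v : V} (huv : u ≠ v) : (G.commonNeighbors u v).Subsingleton := by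
  rintro x ⟨hux, hvx⟩ y ⟨huy, hvy⟩
  rw [SimpleGraph.mem_neighborSet] at hux hvx huy hvy
  let p : G.Path u v := ⟨.cons hux (.cons hvx.symm .nil), by simp [hux.ne, hvx.ne', huv]⟩
  let q : G.Path u v := ⟨.cons huy (.cons hvy.symm .nil), by simp [huy.ne, hvy.ne', huv]⟩
  have hsupport : p.1.support = q.1.support := by rw [(hG.subsingleton_path u v).elim p q]
  simpa [p, q] using hsupport

section Dominators

variable {V : Type*} (G : SimpleGraph V)

/-- The vertices of `S` that dominate `x`, that is, the intersection of `S` with the closed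
neighborhood of `x`. -/
noncomputable def dominators (S : Finset V) (x : V) : Finset V :=
  {u ∈ S | u = x ∨ G.Adj u x}

variable {G} {S : Finset V} {u v x : V}

theorem mem_dominators : u ∈ dominators G S x ↔ u ∈ S ∧ (u = x ∨ G.Adj u x) :=
  mem_filter

theorem self_mem_dominators (hx : x ∈ S) : x ∈ dominators G S x :=
  mem_dominators.2 ⟨hx, Or.inl rfl⟩

theorem dominators_erase : dominators G (S.erase v) x = (dominators G S x).erase v :=
  by
  simp only [dominators, filter_erase]

end Dominators

section DominatingSets

variable {V : Type*} [Fintype V] {G : SimpleGraph V} {S : Finset V} {v x : V}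

theorem mem_domSets_iff_dominators_nonempty :
    S ∈ domSets G ↔ ∀ x, (dominators G S x).Nonempty := by
  simp only [domSets, mem_filter_univ]
  refine ⟨fun hS x => ?_, fun hS x hx => ?_⟩
  · by_cases hx : x ∈ S
    · exact ⟨x, self_mem_dominators hx⟩
    · obtain ⟨u, hu, hux⟩ := hS x hx
      exact ⟨u, mem_dominators.2 ⟨hu, Or.inr hux⟩⟩
  · obtain ⟨u, hu⟩ := hS x
    obtain ⟨huS, rfl | hux⟩ := mem_dominators.1 hu
    exacts [absurd huS hx, ⟨u, huS, hux⟩]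

theorem univ_mem_domSets : univ ∈ domSets G :=
  mem_domSets_iff_dominators_nonempty.2 fun x => ⟨x, self_mem_dominators (mem_univ x)⟩

theorem sum_card_filter_erase_mem_domSets_le :
    ∑ S ∈ domSets G, #{v ∈ S | S.erase v ∈ domSets G} ≤ ∑ S ∈ domSets G, #Sᶜ := by
  have hcard (v : V) : #{S ∈ domSets G | v ∈ S ∧ S.erase v ∈ domSets G} ≤
      #{S ∈ domSets G | v ∉ S} := by
    refine card_le_card_of_injOn (·.erase v) (fun S hS => ?_) fun S hS T hT h => ?_
    · simp only [mem_coe, mem_filter] at hS ⊢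
      exact ⟨hS.2.2, notMem_erase v S⟩
    · simp only [coe_filter, Set.mem_ofPred_eq] at hS hT
      exact erase_injOn' v hS.2.1 hT.2.1 h
  calc ∑ S ∈ domSets G, #{v ∈ S | S.erase v ∈ domSets G}
      = ∑ S ∈ domSets G, #{v | v ∈ S ∧ S.erase v ∈ domSets G} := by
        simp only [← filter_filter, filter_univ_mem]
    _ = ∑ v, #{S ∈ domSets G | v ∈ S ∧ S.erase v ∈ domSets G} :=
        sum_card_bipartiteAbove_eq_sum_card_bipartiteBelow _
    _ ≤ ∑ v, #{S ∈ domSets G | v ∉ S} := sum_le_sum fun v _ => hcard v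
    _ = ∑ S ∈ domSets G, #{v | v ∉ S} :=
        (sum_card_bipartiteAbove_eq_sum_card_bipartiteBelow _).symm
    _ = ∑ S ∈ domSets G, #Sᶜ := by simp only [compl_eq_univ_sdiff, filter_notMem_eq_sdiff]

variable (G) in
/-- The private neighbors of `v` with respect to `S`: the vertices, possibly `v` itself, that `v`
alone dominates. There are none if `v ∉ S`. -/
noncomputable def privateNbrs (S : Finset V) (v : V) : Finset V :=
  {x | dominators G S x = {v}}

theorem mem_privateNbrs : x ∈ privateNbrs G S v ↔ dominators G S x = {v} :=
  mem_filter_univ x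

theorem mem_of_mem_privateNbrs (hx : x ∈ privateNbrs G S v) : v ∈ S :=
  (mem_dominators.1 (mem_privateNbrs.1 hx ▸ mem_singleton_self v)).1

theorem erase_mem_domSets_iff (hS : S ∈ domSets G) :
    S.erase v ∈ domSets G ↔ privateNbrs G S v = ∅ := by
  rw [mem_domSets_iff_dominators_nonempty] at hS ⊢
  simp only [privateNbrs, filter_eq_empty_iff, mem_univ, true_imp_iff, dominators_erase,
    nonempty_iff_ne_empty, ne_eq, erase_eq_empty_iff, (hS _).ne_empty, false_or]

variable (G) in
/-- The external private neighbors of `v` with respect to `S`, that is, those outside `S`: erasing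
`v` amounts to this, since no other vertex of `S` is a private neighbor of `v`. -/
noncomputable def extPrivateNbrs (S : Finset V) (v : V) : Finset V :=
  (privateNbrs G S v).erase v

theorem mem_extPrivateNbrs :
    x ∈ extPrivateNbrs G S v ↔ x ∉ S ∧ dominators G S x = {v} := by
  rw [extPrivateNbrs, mem_erase, mem_privateNbrs]
  refine and_congr_left fun hx => ⟨fun hne hxS => hne ?_, ?_⟩
  · exact mem_singleton.1 (hx ▸ self_mem_dominators hxS)
  · rintro hxS rfl
    exact hxS (mem_of_mem_privateNbrs (mem_privateNbrs.2 hx))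

theorem pairwiseDisjoint_extPrivateNbrs (S : Finset V) :
    (Set.univ : Set V).PairwiseDisjoint (extPrivateNbrs G S) := by
  refine fun u _ v _ huv => disjoint_left.2 fun x hu hv => huv ?_
  exact singleton_injective
    ((mem_extPrivateNbrs.1 hu).2.symm.trans (mem_extPrivateNbrs.1 hv).2)

end DominatingSets

section Blocks

variable {V : Type*} [Fintype V] (G : SimpleGraph V) (f : V → V)

/-- The vertices that are their own only private neighbor with respect to `S` and that `f` sends to
`w`. Such vertices lie in `S` and are isolated in the subgraph induced by `S`. -/
noncomputable def block (S : Finset V) (w : V) : Finset V :=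
  {v | privateNbrs G S v = {v} ∧ f v = w}

/-- The set obtained from `S` by exchanging the block of `w` for `w`. -/
noncomputable def exchange (S : Finset V) (w : V) : Finset V :=
  insert w (S \ block G f S w)

variable {G f} {S : Finset V} {u v w x : V}

theorem mem_block : v ∈ block G f S w ↔ privateNbrs G S v = {v} ∧ f v = w :=
  mem_filter_univ v

theorem dominators_eq_of_mem_block (hv : v ∈ block G f S w) : dominators G S v = {v} :=
  mem_privateNbrs.1 ((mem_block.1 hv).1 ▸ mem_singleton_self v)

theorem block_subset (S : Finset V) (w : V) : block G f S w ⊆ S := fun _ hv =>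
  mem_of_mem_privateNbrs (mem_privateNbrs.2 (dominators_eq_of_mem_block hv))

theorem eq_of_dominators_eq_of_mem_block (hv : v ∈ block G f S w)
    (hx : dominators G S x = {v}) : x = v :=
  mem_singleton.1 ((mem_block.1 hv).1 ▸ mem_privateNbrs.2 hx)

theorem card_filter_erase_notMem_domSets_le (f : V → V) (hS : S ∈ domSets G) :
    #{v ∈ S | S.erase v ∉ domSets G} ≤
      #{v | 0 < #(extPrivateNbrs G S v)} + ∑ w, #(block G f S w) := by
  have hfiber : #{v | privateNbrs G S v = {v}} = ∑ w, #(block G f S w) := by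
    rw [card_eq_sum_card_fiberwise (f := f) (t := univ) fun _ _ => mem_univ _]
    simp only [block, filter_filter]
  rw [← hfiber]
  refine (card_le_card fun v hv => ?_).trans (card_union_le _ _)
  have hne : privateNbrs G S v ≠ ∅ := mt (erase_mem_domSets_iff hS).2 (mem_filter.1 hv).2
  simp only [mem_union, mem_filter_univ, card_pos, extPrivateNbrs, nonempty_iff_ne_empty, ne_eq,
    erase_eq_empty_iff, hne, false_or]
  exact (em _).symm

variable (hadj : ∀ v, G.Adj v (f v))
include hadj

theorem adj_of_mem_block (hv : v ∈ block G f S w) : G.Adj v w :=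
  (mem_block.1 hv).2 ▸ hadj v

theorem notMem_of_mem_block (hv : v ∈ block G f S w) : w ∉ S := fun hw => by
  have hvw := adj_of_mem_block hadj hv
  have hmem : w ∈ dominators G S v := mem_dominators.2 ⟨hw, Or.inr hvw.symm⟩
  rw [dominators_eq_of_mem_block hv, mem_singleton] at hmem
  exact hvw.ne hmem.symm

theorem notMem_extPrivateNbrs_of_mem_block (hv : v ∈ block G f S w) :
    w ∉ extPrivateNbrs G S u := fun hw => by
  have hdom := (mem_extPrivateNbrs.1 hw).2
  have hvw := adj_of_mem_block hadj hv
  have hmem : v ∈ dominators G S w := mem_dominators.2 ⟨block_subset S w hv, Or.inr hvw⟩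
  obtain rfl : v = u := mem_singleton.1 (hdom ▸ hmem)
  exact hvw.ne' (eq_of_dominators_eq_of_mem_block hv hdom)

theorem sum_card_extPrivateNbrs_add_card_filter_block_pos_le (S : Finset V) :
    ∑ v, #(extPrivateNbrs G S v) + #{w | 0 < #(block G f S w)} ≤ #Sᶜ := by
  rw [← card_biUnion ((pairwiseDisjoint_extPrivateNbrs S).subset (Set.subset_univ _)),
    ← card_union_of_disjoint]
  · refine card_le_card (union_subset (biUnion_subset.2 fun v _ x hx => ?_) fun w hw => ?_)
    · exact mem_compl.2 (mem_extPrivateNbrs.1 hx).1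
    · obtain ⟨v, hv⟩ := card_pos.1 ((mem_filter_univ w).1 hw)
      exact mem_compl.2 (notMem_of_mem_block hadj hv)
  · refine disjoint_right.2 fun w hw hw' => ?_
    obtain ⟨v, hv⟩ := card_pos.1 ((mem_filter_univ w).1 hw)
    obtain ⟨u, -, hu⟩ := mem_biUnion.1 hw'
    exact notMem_extPrivateNbrs_of_mem_block hadj hv hu

variable (hf : ∀ u v, u ≠ v → f u = f v → (G.commonNeighbors u v).Subsingleton)
include hf

theorem exists_mem_dominators_notMem_block (hS : S ∈ domSets G) (hxw : x ≠ w)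
    (hx : x ∉ block G f S w) : ∃ u ∈ dominators G S x, u ∉ block G f S w := by
  by_contra! hblock
  have hadj_x {u : V} (hu : u ∈ dominators G S x) : G.Adj u x := by
    obtain ⟨-, rfl | hux⟩ := mem_dominators.1 hu
    exacts [absurd (hblock u hu) hx, hux]
  obtain ⟨u, hu⟩ := mem_domSets_iff_dominators_nonempty.1 hS x
  have hne : dominators G S x ≠ {u} := fun h =>
    (hadj_x hu).ne' (eq_of_dominators_eq_of_mem_block (hblock u hu) h)
  obtain ⟨v, hv, hvu⟩ := (nontrivial_iff_ne_singleton hu).2 hne |>.exists_ne u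
  have hfuv : f v = f u :=
    (mem_block.1 (hblock v hv)).2.trans (mem_block.1 (hblock u hu)).2.symm
  exact hxw (hf v u hvu hfuv ⟨hadj_x hv, hadj_x hu⟩
    ⟨adj_of_mem_block hadj (hblock v hv), adj_of_mem_block hadj (hblock u hu)⟩)

theorem exchange_mem_domSets (hS : S ∈ domSets G) : exchange G f S w ∈ domSets G := by
  refine mem_domSets_iff_dominators_nonempty.2 fun x => ?_
  by_cases hxw : x = w
  · exact ⟨x, self_mem_dominators (hxw ▸ mem_insert_self ..)⟩
  by_cases hx : x ∈ block G f S w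
  · exact ⟨w, mem_dominators.2 ⟨mem_insert_self .., Or.inr (adj_of_mem_block hadj hx).symm⟩⟩
  obtain ⟨u, hu, hub⟩ := exists_mem_dominators_notMem_block hadj hf hS hxw hx
  obtain ⟨huS, hux⟩ := mem_dominators.1 hu
  exact ⟨u, mem_dominators.2 ⟨mem_insert_of_mem (mem_sdiff.2 ⟨huS, hub⟩), hux⟩⟩

theorem extPrivateNbrs_exchange (hS : S ∈ domSets G) (hw : w ∉ S) :
    extPrivateNbrs G (exchange G f S w) w = block G f S w := by
  ext x
  rw [mem_extPrivateNbrs]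
  constructor
  · rintro ⟨hxT, hdom⟩
    by_contra hx
    have hxw : x ≠ w := fun h => hxT (h ▸ mem_insert_self ..)
    obtain ⟨u, hu, hub⟩ := exists_mem_dominators_notMem_block hadj hf hS hxw hx
    obtain ⟨huS, hux⟩ := mem_dominators.1 hu
    have huT : u ∈ dominators G (exchange G f S w) x :=
      mem_dominators.2 ⟨mem_insert_of_mem (mem_sdiff.2 ⟨huS, hub⟩), hux⟩
    rw [hdom, mem_singleton] at huT
    exact hw (huT ▸ huS)
  · intro hx
    have hxw := adj_of_mem_block hadj hx
    have hxT : x ∉ exchange G f S w := by simp [exchange, hx, hxw.ne]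
    refine ⟨hxT, eq_singleton_iff_unique_mem.2 ⟨?_, fun u hu => ?_⟩⟩
    · exact mem_dominators.2 ⟨mem_insert_self .., Or.inr hxw.symm⟩
    · obtain ⟨huT, hux⟩ := mem_dominators.1 hu
      refine (mem_insert.1 huT).resolve_right fun hu' => hxT ?_
      have hmem := mem_dominators.2 ⟨(mem_sdiff.1 hu').1, hux⟩
      rw [dominators_eq_of_mem_block hx, mem_singleton] at hmem
      exact hmem ▸ huT

theorem exchange_injOn (w : V) :
    Set.InjOn (exchange G f · w) {S | S ∈ domSets G ∧ w ∉ S} := by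
  refine Set.LeftInvOn.injOn (f₁' := fun T => T.erase w ∪ extPrivateNbrs G T w) ?_
  rintro S ⟨hS, hw⟩
  dsimp only
  rw [extPrivateNbrs_exchange hadj hf hS hw, exchange,
    erase_insert fun h => hw (mem_sdiff.1 h).1, sdiff_union_of_subset (block_subset S w)]

theorem sum_card_block_sub_one_le (w : V) :
    ∑ S ∈ domSets G, (#(block G f S w) - 1) ≤
      ∑ S ∈ domSets G, (#(extPrivateNbrs G S w) - 1) := by
  have hinj : Set.InjOn (exchange G f · w) (SetLike.coe {S ∈ domSets G | w ∉ S}) := by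
    simpa only [coe_filter] using exchange_injOn hadj hf w
  calc ∑ S ∈ domSets G, (#(block G f S w) - 1)
      = ∑ S ∈ domSets G with w ∉ S, (#(block G f S w) - 1) := by
        refine (sum_filter_of_ne fun S _ hne => ?_).symm
        obtain ⟨v, hv⟩ : (block G f S w).Nonempty := card_pos.1 (by omega)
        exact notMem_of_mem_block hadj hv
    _ = ∑ S ∈ domSets G with w ∉ S, (#(extPrivateNbrs G (exchange G f S w) w) - 1) := by
        refine sum_congr rfl fun S hS => ?_
        rw [extPrivateNbrs_exchange hadj hf (mem_filter.1 hS).1 (mem_filter.1 hS).2]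
    _ = ∑ T ∈ {S ∈ domSets G | w ∉ S}.image (exchange G f · w),
          (#(extPrivateNbrs G T w) - 1) :=
        (sum_image (f := fun T => #(extPrivateNbrs G T w) - 1) hinj).symm
    _ ≤ ∑ T ∈ domSets G, (#(extPrivateNbrs G T w) - 1) :=
        sum_le_sum_of_subset <| image_subset_iff.2 fun S hS =>
          exchange_mem_domSets hadj hf (mem_filter.1 hS).1

theorem sum_card_filter_erase_notMem_domSets_le :
    ∑ S ∈ domSets G, #{v ∈ S | S.erase v ∉ domSets G} ≤ ∑ S ∈ domSets G, #Sᶜ := by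
  have hsurplus : ∑ S ∈ domSets G, ∑ w, (#(block G f S w) - 1) ≤
      ∑ S ∈ domSets G, ∑ w, (#(extPrivateNbrs G S w) - 1) := by
    rw [sum_comm, sum_comm (s := domSets G)]
    exact sum_le_sum fun w _ => sum_card_block_sub_one_le hadj hf w
  calc ∑ S ∈ domSets G, #{v ∈ S | S.erase v ∉ domSets G}
      ≤ ∑ S ∈ domSets G,
          (#{v | 0 < #(extPrivateNbrs G S v)} + ∑ w, #(block G f S w)) :=
        sum_le_sum fun S hS => card_filter_erase_notMem_domSets_le f hS
    _ = ∑ S ∈ domSets G, #{v | 0 < #(extPrivateNbrs G S v)} +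
          (∑ S ∈ domSets G, #{w | 0 < #(block G f S w)} +
            ∑ S ∈ domSets G, ∑ w, (#(block G f S w) - 1)) := by
        simp only [sum_eq_card_filter_pos_add_sum_sub_one univ fun w => #(block G f _ w),
          sum_add_distrib]
    _ ≤ ∑ S ∈ domSets G, #{v | 0 < #(extPrivateNbrs G S v)} +
          (∑ S ∈ domSets G, #{w | 0 < #(block G f S w)} +
            ∑ S ∈ domSets G, ∑ w, (#(extPrivateNbrs G S w) - 1)) := by gcongr
    _ = ∑ S ∈ domSets G,
          (∑ v, #(extPrivateNbrs G S v) + #{w | 0 < #(block G f S w)}) := by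
        simp only [sum_eq_card_filter_pos_add_sum_sub_one univ fun v => #(extPrivateNbrs G _ v),
          sum_add_distrib]
        ring
    _ ≤ ∑ S ∈ domSets G, #Sᶜ :=
        sum_le_sum fun S _ => sum_card_extPrivateNbrs_add_card_filter_block_pos_le hadj S

theorem three_mul_sum_card_domSets_le :
    3 * ∑ S ∈ domSets G, #S ≤ 2 * (#(domSets G) * Fintype.card V) := by
  have hsplit : ∑ S ∈ domSets G, #S =
      ∑ S ∈ domSets G, #{v ∈ S | S.erase v ∈ domSets G} +
        ∑ S ∈ domSets G, #{v ∈ S | S.erase v ∉ domSets G} := by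
    simp only [← sum_add_distrib, card_filter_add_card_filter_not]
  have htotal : ∑ S ∈ domSets G, #S + ∑ S ∈ domSets G, #Sᶜ =
      #(domSets G) * Fintype.card V := by
    simp only [← sum_add_distrib, card_add_card_compl, sum_const, smul_eq_mul]
  have herase := sum_card_filter_erase_mem_domSets_le (G := G)
  have hcritical := sum_card_filter_erase_notMem_domSets_le hadj hf
  omega

end Blocks

/-- Besides forests, this covers 4-cycle-free graphs without isolated vertices and, with `f`
injective, all graphs spanned by disjoint edges and cycles, such as regular graphs of positive
degree. -/
theorem avd_forest_le_general {V : Type*} [Fintype V] (G : SimpleGraph V) (f : V → V)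
    (hadj : ∀ v, G.Adj v (f v))
    (hf : ∀ u v, u ≠ v → f u = f v → (G.commonNeighbors u v).Subsingleton) :
    avd G ≤ 2 * (Fintype.card V : ℚ) / 3 := by
  have hpos : (0 : ℚ) < #(domSets G) := by exact_mod_cast card_pos.2 ⟨univ, univ_mem_domSets⟩
  have hsum : 3 * ∑ S ∈ domSets G, (#S : ℚ) ≤ 2 * (#(domSets G) * Fintype.card V) := by
    exact_mod_cast three_mul_sum_card_domSets_le hadj hf
  rw [avd, div_le_div_iff₀ hpos three_pos]
  linarith

/-- If `G` is a forest on `n` vertices with no isolated vertices, then the average order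
of a dominating set of `G` satisfies `avd G ≤ 2n/3`. -/
theorem avd_forest_le {V : Type*} [Fintype V] (G : SimpleGraph V)
    (hforest : G.IsAcyclic) (hiso : ∀ v : V, ∃ u, G.Adj v u) :
    avd G ≤ 2 * (Fintype.card V : ℚ) / 3 := by
  choose f hadj using hiso
  exact avd_forest_le_general G f hadj fun _ _ huv _ =>
    subsingleton_commonNeighbors_of_isAcyclic hforest huv
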